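/- Let n be an even integer with n ≥ 4 and let C ∈ Ω_n. Then there is exactly one matrix in the equivalence class of C with constant row sums; namely, if Y ∈ Ω_n satisfies Y ~ C and ⟨R_k,Y⟩ takes the same value for all 1 ≤ k ≤ n, then Y = X, where X ∈ Ω_n is defined by X_{i,j} = (2(n−1)/(n−2))·μ_element(C) + C_{i,j} − (⟨R_i,C⟩ + ⟨R_j,C⟩)/(n−2) for i ≠ j (and X_{i,i} = 0). -/

import Mathlib

open Finset

def hollowSym {n : ℕ} (C : Matrix (Fin n) (Fin n) ℝ) : Prop :=
  C.IsSymm ∧ ∀ i, C i i = 0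

noncomputable def innerH {n : ℕ} (X C : Matrix (Fin n) (Fin n) ℝ) : ℝ :=
  (1 / 2) * ∑ i, ∑ j, X i j * C i j

noncomputable def adjR {n : ℕ} (i : Fin n) : Matrix (Fin n) (Fin n) ℝ :=
  Matrix.of fun k l => if k ≠ l ∧ (i = k ∨ i = l) then 1 else 0

def IsPairing {n : ℕ} (S : Matrix (Fin n) (Fin n) ℝ) : Prop :=
  S.IsSymm ∧ (∀ i, S i i = 0) ∧ (∀ i j, S i j = 0 ∨ S i j = 1) ∧ (∀ i, ∑ j, S i j = 1)

noncomputable def pairings (n : ℕ) : Finset (Matrix (Fin n) (Fin n) ℝ) :=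
  (Finset.univ.filter (fun σ : Equiv.Perm (Fin n) => ∀ i, σ i ≠ i ∧ σ (σ i) = i)).image
    (fun σ => Matrix.of fun i j => if σ i = j then (1 : ℝ) else 0)

noncomputable def pairSum {n : ℕ} (C : Matrix (Fin n) (Fin n) ℝ) : ℝ :=
  ∑ i, ∑ j ∈ Finset.univ.filter (fun j => i < j), C i j

noncomputable def muEl {n : ℕ} (C : Matrix (Fin n) (Fin n) ℝ) : ℝ :=
  (2 / ((n : ℝ) * ((n : ℝ) - 1))) * pairSum C

noncomputable def Jmat (n : ℕ) : Matrix (Fin n) (Fin n) ℝ := Matrix.of fun _ _ => 1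

noncomputable def muSum (n : ℕ) (C : Matrix (Fin n) (Fin n) ℝ) : ℝ :=
  (1 / (Nat.doubleFactorial (n - 1) : ℝ)) * ∑ S ∈ pairings n, innerH S C

noncomputable def sig2El {n : ℕ} (C : Matrix (Fin n) (Fin n) ℝ) : ℝ :=
  (2 / ((n : ℝ) * ((n : ℝ) - 1))) *
    ∑ i, ∑ j ∈ Finset.univ.filter (fun j => i < j), (C i j - muEl C) ^ 2

noncomputable def sig2Sum (n : ℕ) (C : Matrix (Fin n) (Fin n) ℝ) : ℝ :=
  (1 / (Nat.doubleFactorial (n - 1) : ℝ)) *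
    ∑ S ∈ pairings n, (innerH S C - muSum n C) ^ 2

def FPF {n : ℕ} (σ : Fin n → Fin n) : Prop := ∀ x, σ x ≠ x ∧ σ (σ x) = x

lemma fpf_conj {n : ℕ} {σ : Fin n → Fin n} (h : FPF σ) (a b : Fin n) :
    FPF (fun x => Equiv.swap a b (σ (Equiv.swap a b x))) := by
  intro x
  refine ⟨fun hx => (h (Equiv.swap a b x)).1 ?_, ?_⟩
  · have := congrArg (Equiv.swap a b) hx
    simpa using this
  · simp [(h _).2]

lemma fpf_base {n : ℕ} (he : Even n) : FPF (Fin.rev : Fin n → Fin n) := by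
  intro x
  refine ⟨fun h => ?_, Fin.rev_rev x⟩
  have := congrArg Fin.val h
  rw [Fin.val_rev] at this
  obtain ⟨m, rfl⟩ := he
  have := x.2
  omega

lemma fpf_pairing {n : ℕ} {σ : Fin n → Fin n} (h : FPF σ) :
    IsPairing (Matrix.of fun i j => if σ i = j then (1 : ℝ) else 0) := by
  refine ⟨?_, ?_, ?_, ?_⟩
  · ext i j
    simp only [Matrix.transpose_apply, Matrix.of_apply]
    have : σ j = i ↔ σ i = j := by
      constructor <;> (rintro rfl; exact (h _).2)
    simp [this]
  · intro i
    simp [(h i).1]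
  · intro i j
    simp only [Matrix.of_apply]
    split_ifs <;> simp
  · intro i
    simp

lemma innerH_fpf {n : ℕ} (σ : Fin n → Fin n) (C : Matrix (Fin n) (Fin n) ℝ) :
    innerH (Matrix.of fun i j => if σ i = j then (1 : ℝ) else 0) C
      = (1 / 2) * ∑ i, C i (σ i) := by
  simp [innerH]

lemma fpf_exists {n : ℕ} (he : Even n) {i j k l : Fin n} (hij : i ≠ j) (hik : i ≠ k)
    (hil : i ≠ l) (hjk : j ≠ k) (hjl : j ≠ l) (hkl : k ≠ l) :
    ∃ σ : Fin n → Fin n, FPF σ ∧ σ i = j ∧ σ k = l := by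
  have h1 : ∃ σ : Fin n → Fin n, FPF σ ∧ σ i = j := by
    have hb := fpf_base he
    refine ⟨_, fpf_conj hb (Fin.rev i) j, ?_⟩
    rw [Equiv.swap_apply_of_ne_of_ne (hb i).1.symm hij, Equiv.swap_apply_left]
  obtain ⟨σ, hσ, hi⟩ := h1
  have hj : σ j = i := by rw [← hi]; exact (hσ i).2
  have hki : σ k ≠ i := fun h => hjk (by rw [← hi, ← h]; exact (hσ k).2)
  have hkj : σ k ≠ j := fun h => hik (by rw [← hj, ← h]; exact (hσ k).2)
  refine ⟨_, fpf_conj hσ (σ k) l, ?_, ?_⟩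
  · rw [Equiv.swap_apply_of_ne_of_ne hki.symm hil, hi,
      Equiv.swap_apply_of_ne_of_ne hkj.symm hjl]
  · rw [Equiv.swap_apply_of_ne_of_ne (hσ k).1.symm hkl, Equiv.swap_apply_left]

lemma four_point {n : ℕ} (he : Even n) (D : Matrix (Fin n) (Fin n) ℝ)
    (hs : ∀ i j, D i j = D j i)
    (h0 : ∀ σ : Fin n → Fin n, FPF σ → ∑ x, D x (σ x) = 0)
    {i j k l : Fin n} (hij : i ≠ j) (hik : i ≠ k)
    (hil : i ≠ l) (hjk : j ≠ k) (hjl : j ≠ l) (hkl : k ≠ l) :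
    D i j + D k l = D i k + D j l := by
  obtain ⟨σ, hσ, hi, hk⟩ := fpf_exists he hij hik hil hjk hjl hkl
  have hj : σ j = i := by rw [← hi]; exact (hσ i).2
  have hl : σ l = k := by rw [← hk]; exact (hσ k).2
  have e1 := h0 σ hσ
  have e2 := h0 _ (fpf_conj hσ j k)
  have e3 : ∑ x, (D x (σ x) - D x (Equiv.swap j k (σ (Equiv.swap j k x)))) = 0 := by
    rw [Finset.sum_sub_distrib, e1, e2, sub_zero]
  rw [← Finset.sum_subset (Finset.subset_univ ({i, j, k, l} : Finset (Fin n)))] at e3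
  · rw [Finset.sum_insert (by simp [*]), Finset.sum_insert (by simp [*]),
      Finset.sum_insert (by simp [*]), Finset.sum_singleton] at e3
    rw [Equiv.swap_apply_of_ne_of_ne hij hik, Equiv.swap_apply_left,
      Equiv.swap_apply_right, Equiv.swap_apply_of_ne_of_ne hjl.symm hkl.symm,
      hi, hj, hk, hl, Equiv.swap_apply_left, Equiv.swap_apply_right,
      Equiv.swap_apply_of_ne_of_ne hij hik, Equiv.swap_apply_of_ne_of_ne hjl.symm hkl.symm] at e3
    linarith [hs j i, hs l k, hs k i, hs l j]
  · intro x _ hx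
    simp only [Finset.mem_insert, Finset.mem_singleton, not_or] at hx
    obtain ⟨a, b, c, d⟩ := hx
    have hxj : σ x ≠ j := fun h => a (by rw [← hj, ← h]; exact (hσ x).2.symm)
    have hxk : σ x ≠ k := fun h => d (by rw [← hk, ← h]; exact (hσ x).2.symm)
    rw [Equiv.swap_apply_of_ne_of_ne b c, Equiv.swap_apply_of_ne_of_ne hxj hxk, sub_self]

lemma three_point {n : ℕ} (he : Even n) (D : Matrix (Fin n) (Fin n) ℝ)
    (hs : ∀ i j, D i j = D j i) (hd : ∀ i, D i i = 0)
    (h0 : ∀ σ : Fin n → Fin n, FPF σ → ∑ x, D x (σ x) = 0)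
    {i j k : Fin n} (hij : i ≠ j) (hik : i ≠ k) (hjk : j ≠ k) :
    ((n : ℝ) - 2) * (D i j - D i k) = ∑ x, D j x - ∑ x, D k x := by
  have e : ∑ x, (D i j + D k x - D i k - D j x)
      = ∑ x ∈ ({i, j, k} : Finset (Fin n)), (D i j + D k x - D i k - D j x) := by
    symm
    apply Finset.sum_subset (Finset.subset_univ _)
    intro x _ hx
    simp only [Finset.mem_insert, Finset.mem_singleton, not_or] at hx
    have := four_point he D hs h0 hij hik (Ne.symm hx.1) hjk (Ne.symm hx.2.1) (Ne.symm hx.2.2)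
    linarith
  rw [Finset.sum_insert (by simp [*]), Finset.sum_insert (by simp [*]),
      Finset.sum_singleton] at e
  simp only [Finset.sum_sub_distrib, Finset.sum_add_distrib, Finset.sum_const,
    Finset.card_univ, Fintype.card_fin, nsmul_eq_mul] at e
  linarith [hs j i, hs k i, hs k j, hd j, hd k]

lemma two_point {n : ℕ} (he : Even n) (D : Matrix (Fin n) (Fin n) ℝ)
    (hs : ∀ i j, D i j = D j i) (hd : ∀ i, D i i = 0)
    (h0 : ∀ σ : Fin n → Fin n, FPF σ → ∑ x, D x (σ x) = 0)
    {i j : Fin n} (hij : i ≠ j) :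
    ((n : ℝ) - 1) * ((n : ℝ) - 2) * D i j
      = ((n : ℝ) - 1) * (∑ x, D i x + ∑ x, D j x) - ∑ y, ∑ x, D y x := by
  have e : ∑ k, (((n : ℝ) - 2) * (D i j - D i k) - (∑ x, D j x - ∑ x, D k x))
      = ∑ k ∈ ({i} : Finset (Fin n)),
        (((n : ℝ) - 2) * (D i j - D i k) - (∑ x, D j x - ∑ x, D k x)) := by
    symm
    apply Finset.sum_subset (Finset.subset_univ _)
    intro k _ hk
    simp only [Finset.mem_singleton] at hk
    by_cases hjk : j = k
    · subst hjk; ring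
    · rw [three_point he D hs hd h0 hij (Ne.symm hk) hjk, sub_self]
  rw [Finset.sum_singleton] at e
  simp only [Finset.sum_sub_distrib, Finset.sum_const, ← Finset.mul_sum,
    Finset.card_univ, Fintype.card_fin, nsmul_eq_mul] at e
  rw [hd i] at e
  linarith

lemma total_zero {n : ℕ} (hn : 4 ≤ n) (he : Even n) (D : Matrix (Fin n) (Fin n) ℝ)
    (hs : ∀ i j, D i j = D j i) (hd : ∀ i, D i i = 0)
    (h0 : ∀ σ : Fin n → Fin n, FPF σ → ∑ x, D x (σ x) = 0) :
    ∑ y, ∑ x, D y x = 0 := by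
  have hb := fpf_base he
  have hn' : (4 : ℝ) ≤ n := by exact_mod_cast hn
  have e := Finset.sum_congr rfl
    (fun x (_ : x ∈ (Finset.univ : Finset (Fin n))) => two_point he D hs hd h0 (hb x).1.symm)
  rw [← Finset.mul_sum, h0 _ hb, Finset.sum_sub_distrib, ← Finset.mul_sum,
    Finset.sum_add_distrib] at e
  have e2 : ∑ i : Fin n, ∑ x, D (Fin.rev i) x = ∑ i, ∑ x, D i x :=
    Equiv.sum_comp Fin.revPerm (fun i => ∑ x, D i x)
  rw [e2] at e
  simp only [Finset.sum_const, Finset.card_univ, Fintype.card_fin, nsmul_eq_mul] at e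
  have : ((n : ℝ) - 2) * ∑ y, ∑ x, D y x = 0 := by linarith
  rcases mul_eq_zero.1 this with h | h
  · linarith
  · exact h

lemma innerH_adjR {n : ℕ} (C : Matrix (Fin n) (Fin n) ℝ) (hC : hollowSym C) (i : Fin n) :
    innerH (adjR i) C = ∑ x, C i x := by
  have hs : ∀ a b, C a b = C b a := fun a b => hC.1.apply b a
  have h : ∀ k l, adjR i k l * C k l
      = (if i = k then C k l else 0) + (if i = l then C k l else 0) := by
    intro k l
    simp only [adjR, Matrix.of_apply]
    by_cases hkl : k = l
    · subst hkl; simp [hC.2]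
    · by_cases h1 : i = k
      · subst h1; simp [hkl]
      · by_cases h2 : i = l <;> simp [hkl, Ne.symm hkl, h1, h2]
  simp only [innerH, h, Finset.sum_add_distrib]
  rw [Finset.sum_comm]
  simp only [Finset.sum_ite_eq, Finset.mem_univ, if_true]
  rw [Finset.sum_congr rfl (fun x _ => hs x i)]
  ring

lemma sum_eq_pairSum {n : ℕ} (C : Matrix (Fin n) (Fin n) ℝ) (hC : hollowSym C) :
    ∑ i, ∑ x, C i x = 2 * pairSum C := by
  have hs : ∀ a b, C a b = C b a := fun a b => hC.1.apply b a
  have h : ∀ i x, C i x = (if i < x then C i x else 0) + (if x < i then C x i else 0) := by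
    intro i x
    rcases lt_trichotomy i x with h | h | h
    · simp [h, h.not_gt]
    · subst h; simp [hC.2]
    · simp [h, h.not_gt, hs i x]
  simp only [pairSum, Finset.sum_filter]
  rw [Finset.sum_congr rfl (fun i _ => Finset.sum_congr rfl (fun x _ => h i x))]
  simp only [Finset.sum_add_distrib]
  rw [Finset.sum_comm (f := fun i x => if x < i then C x i else 0)]
  ring

theorem stmt19 (n : ℕ) (hn : 4 ≤ n) (he : Even n) (C : Matrix (Fin n) (Fin n) ℝ)
    (hC : hollowSym C) (X : Matrix (Fin n) (Fin n) ℝ)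
    (hX : X = Matrix.of fun i j =>
      if i = j then 0
      else (2 * ((n : ℝ) - 1) / ((n : ℝ) - 2)) * muEl C + C i j
        - (innerH (adjR i) C + innerH (adjR j) C) / ((n : ℝ) - 2))
    (Y : Matrix (Fin n) (Fin n) ℝ) (hY : hollowSym Y)
    (hsim : ∀ S, IsPairing S → innerH S Y = innerH S C)
    (hconst : ∀ k l : Fin n, innerH (adjR k) Y = innerH (adjR l) Y) :
    Y = X := by
  have hsC : ∀ a b, C a b = C b a := fun a b => hC.1.apply b a
  have hsY : ∀ a b, Y a b = Y b a := fun a b => hY.1.apply b a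
  have hn' : (4 : ℝ) ≤ n := by exact_mod_cast hn
  have hs : ∀ i j, (Y - C) i j = (Y - C) j i := by
    intro i j; simp only [Matrix.sub_apply]; rw [hsC i j, hsY i j]
  have hd : ∀ i, (Y - C) i i = 0 := by
    intro i; simp [hC.2, hY.2]
  have h0 : ∀ σ : Fin n → Fin n, FPF σ → ∑ x, (Y - C) x (σ x) = 0 := by
    intro σ hσ
    have := hsim _ (fpf_pairing hσ)
    rw [innerH_fpf, innerH_fpf] at this
    simp only [Matrix.sub_apply, Finset.sum_sub_distrib]
    linarith
  have hT := total_zero hn he _ hs hd h0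
  ext i j
  rw [hX]
  simp only [Matrix.of_apply]
  split_ifs with hij
  · subst hij; exact hY.2 i
  have h2 := two_point he _ hs hd h0 hij
  rw [hT] at h2
  simp only [Matrix.sub_apply, Finset.sum_sub_distrib] at h2 hT
  rw [sum_eq_pairSum C hC] at hT
  simp only [innerH_adjR _ hY] at hconst
  rw [Finset.sum_congr rfl (fun k _ => hconst k i)] at hT
  simp only [Finset.sum_const, Finset.card_univ, Fintype.card_fin, nsmul_eq_mul] at hT
  rw [hconst j i] at h2
  rw [innerH_adjR C hC, innerH_adjR C hC, muEl]
  have a0 : (n : ℝ) ≠ 0 := by linarith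
  have a1 : (n : ℝ) - 1 ≠ 0 := by intro h; linarith
  have a2 : (n : ℝ) - 2 ≠ 0 := by intro h; linarith
  have hy : ∑ x, Y i x = 2 * pairSum C / n := by
    rw [eq_div_iff a0]; linarith
  rw [hy] at h2
  have h3 : ((n : ℝ) - 2) * (Y i j - C i j)
      = 4 * pairSum C / n - (∑ x, C i x + ∑ x, C j x) := by
    apply mul_left_cancel₀ a1
    linear_combination h2
  have h4 : Y i j - C i j = (4 * pairSum C / n - (∑ x, C i x + ∑ x, C j x)) / ((n : ℝ) - 2) := by
    rw [eq_div_iff a2]; linarith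
  have h5 : Y i j = C i j + (4 * pairSum C / n - (∑ x, C i x + ∑ x, C j x)) / ((n : ℝ) - 2) := by
    linarith
  rw [h5]
  field_simp
  ring
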